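/- For the barbell quiver with potential: (i) every band module M(v, λ, m) has its map f_c an isomorphism; (ii) a string module M(w) has its map f_c an isomorphism if and only if both the first and the last letter of the walk w belong to {c, c⁻¹}. -/

import Mathlib

/-!
# Statement 6

Work over `ℂ`.  The barbell quiver has vertices `1` and `2`, a loop `a` at vertex `1`, a
loop `b` at vertex `2`, and an arrow `c : 1 → 2`; its potential is `W = a³ + b³`, whose
Jacobian relations are `a² = 0` and `b² = 0`.

(i) every band module `M(v, λ, m)` has its map `f_c` an isomorphism;
(ii) a string module `M(w)` has its map `f_c` an isomorphism if and only if both the first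
and the last letter of the walk `w` belong to `{c, c⁻¹}`.

We encode vertex `1` as `false` and vertex `2` as `true`.  A walk is a nonempty list of
letters `a, b, c, a⁻¹, b⁻¹, c⁻¹` with consecutive letters composable, no letter immediately
followed by its own inverse, and no consecutive `aa`, `a⁻¹a⁻¹`, `bb`, `b⁻¹b⁻¹` (the last
two conditions say that neither `w` nor its inverse contains `aa` or `bb`).  The string
module `M(w)` of a walk of length `r` has basis vectors `z₀, …, z_r`, with `z_k` placed at
the vertex reached after the first `k` letters, and with `f_d z_{k-1} = z_k` when the
`k`-th letter is `d` and `f_d z_k = z_{k-1}` when the `k`-th letter is `d⁻¹` (all other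
basis vectors mapping to `0`); we realise it by matrices acting on the coordinate spaces
indexed by the vertex-`1` and vertex-`2` positions.  Band modules `M(v, λ, m)` are encoded
similarly, with copies of `ℂᵐ` indexed by `ℤ/r` and with the wrap-around letter acting by
the Jordan block `J_m(λ)`.

The theorem additionally records that the string and band modules satisfy the Jacobian
relations `f_a ∘ f_a = 0` and `f_b ∘ f_b = 0`, i.e. are genuine representations of the
barbell quiver with potential.
-/

noncomputable section

/-- The six letters `a, b, c, a⁻¹, b⁻¹, c⁻¹`. -/
inductive Letter | a | b | c | ai | bi | ci
deriving DecidableEq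

namespace Letter

/-- Formal inverse of a letter. -/
def inv : Letter → Letter
  | a => ai | ai => a | b => bi | bi => b | c => ci | ci => c

/-- Start vertex of a letter (`false` = vertex 1, `true` = vertex 2):
`a, a⁻¹` go from vertex `1` to `1`; `b, b⁻¹` from `2` to `2`; `c` from `1` to `2`;
`c⁻¹` from `2` to `1`. -/
def src : Letter → Bool
  | a => false | ai => false | b => true | bi => true | c => false | ci => true

/-- End vertex of a letter. -/
def tgt : Letter → Bool
  | a => false | ai => false | b => true | bi => true | c => true | ci => false

end Letter

/-- Two consecutive letters of a walk must be composable, the second must not be the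
inverse of the first, and the pair must not be `aa`, `a⁻¹a⁻¹`, `bb` or `b⁻¹b⁻¹`. -/
def okPair (x y : Letter) : Prop :=
  x.tgt = y.src ∧ y ≠ x.inv ∧ ¬(x = .a ∧ y = .a) ∧ ¬(x = .ai ∧ y = .ai) ∧
    ¬(x = .b ∧ y = .b) ∧ ¬(x = .bi ∧ y = .bi)

/-- A walk: a nonempty word in the letters, whose consecutive pairs are admissible. -/
def IsWalk (w : List Letter) : Prop := w ≠ [] ∧ w.Chain' okPair

/-- The vertex of the `k`-th vertex-instance of the walk `w` (for `0 ≤ k ≤ w.length`):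
the vertex reached after the first `k` letters.  For `k < w.length` this is the source of
the `k`-th letter (`0`-indexed); for `k = w.length` it is the target of the last letter. -/
def vertAt (w : List Letter) (k : ℕ) : Bool :=
  (w[k]?).elim (w.getLast?.elim false Letter.tgt) Letter.src

/-- A representation of the barbell quiver: vector spaces `V1, V2` and linear maps
`fa, fb, fc`.  (The Jacobian relations `fa ∘ fa = 0`, `fb ∘ fb = 0` are recorded in the
theorem below for the string and band modules.) -/
structure BRep where
  V1 : Type
  V2 : Type
  [acg1 : AddCommGroup V1]
  [acg2 : AddCommGroup V2]
  [mod1 : Module ℂ V1]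
  [mod2 : Module ℂ V2]
  fa : V1 →ₗ[ℂ] V1
  fb : V2 →ₗ[ℂ] V2
  fc : V1 →ₗ[ℂ] V2

attribute [instance] BRep.acg1 BRep.acg2 BRep.mod1 BRep.mod2

/-! ## String modules -/

/-- The entry of the matrix of `f_d` on the string module of `w`, in rows/columns indexed
by the positions `0, …, w.length`:  `f_d z_{k-1} = z_k` when the `k`-th letter of `w` is
`d` (contribution at row `j = i + 1`, column `i` with `w[i] = d`), and `f_d z_k = z_{k-1}`
when the `k`-th letter is `d⁻¹` (contribution at row `j`, column `i = j + 1` with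
`w[j] = d⁻¹`); all other entries vanish. -/
def strEntry (w : List Letter) (d : Letter) (j i : ℕ) : ℂ :=
  if (j = i + 1 ∧ w[i]? = some d) ∨ (i = j + 1 ∧ w[j]? = some d.inv) then 1 else 0

/-- Positions of the string module lying at vertex `1`. -/
abbrev SIdx1 (w : List Letter) := {k : Fin (w.length + 1) // vertAt w (k : ℕ) = false}

/-- Positions of the string module lying at vertex `2`. -/
abbrev SIdx2 (w : List Letter) := {k : Fin (w.length + 1) // vertAt w (k : ℕ) = true}

/-- The string module `M(w)` of a walk `w`. -/
def stringModule (w : List Letter) : BRep where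
  V1 := SIdx1 w → ℂ
  V2 := SIdx2 w → ℂ
  fa := Matrix.mulVecLin (fun j i : SIdx1 w => strEntry w .a (j.1 : ℕ) (i.1 : ℕ))
  fb := Matrix.mulVecLin (fun j i : SIdx2 w => strEntry w .b (j.1 : ℕ) (i.1 : ℕ))
  fc := Matrix.mulVecLin (fun (j : SIdx2 w) (i : SIdx1 w) => strEntry w .c (j.1 : ℕ) (i.1 : ℕ))

/-! ## Band modules -/

/-- A band: a walk whose endpoint equals its starting vertex, every power of which is again
a walk, and which is not a proper power of a shorter word. -/
def IsBand (v : List Letter) : Prop :=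
  IsWalk v ∧ vertAt v 0 = vertAt v v.length ∧
    (∀ n : ℕ, 0 < n → IsWalk (List.flatten (List.replicate n v))) ∧
    ¬ ∃ (u : List Letter) (m : ℕ), 2 ≤ m ∧ v = List.flatten (List.replicate m u)

/-- The `m × m` Jordan block with eigenvalue `λ`. -/
def jordan (lam : ℂ) {m : ℕ} (s t : Fin m) : ℂ :=
  if s = t then lam else if (s : ℕ) = (t : ℕ) + 1 then 1 else 0

/-- The entry of the matrix of `f_d` on the band module of `v` (copies of `ℂᵐ` indexed by
`ℤ/r`, `r = v.length`), in rows/columns indexed by pairs (position `< r`, coordinate in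
`Fin m`): the `k`-th letter `d` maps the `(k-1)`-st copy to the `k`-th copy by the identity
when `k < r` and by the Jordan block `J_m(λ)` when `k = r` (wrap-around), and dually for
`d⁻¹`. -/
def bandEntry (v : List Letter) (d : Letter) (lam : ℂ) {m : ℕ} (j i : ℕ) (s t : Fin m) : ℂ :=
  (if j = i + 1 ∧ v[i]? = some d then (if s = t then 1 else 0) else 0)
  + (if j = 0 ∧ i + 1 = v.length ∧ v[i]? = some d then jordan lam s t else 0)
  + (if i = j + 1 ∧ v[j]? = some d.inv then (if s = t then 1 else 0) else 0)
  + (if i = 0 ∧ j + 1 = v.length ∧ v[j]? = some d.inv then jordan lam s t else 0)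

/-- Copies of the band module lying at vertex `1`, with their `Fin m` coordinates. -/
abbrev BIdx1 (v : List Letter) (m : ℕ) :=
  {k : Fin v.length // vertAt v (k : ℕ) = false} × Fin m

/-- Copies of the band module lying at vertex `2`, with their `Fin m` coordinates. -/
abbrev BIdx2 (v : List Letter) (m : ℕ) :=
  {k : Fin v.length // vertAt v (k : ℕ) = true} × Fin m

/-- The band module `M(v, λ, m)`. -/
def bandModule (v : List Letter) (lam : ℂ) (m : ℕ) : BRep where
  V1 := BIdx1 v m → ℂ
  V2 := BIdx2 v m → ℂ
  fa := Matrix.mulVecLin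
    (fun p q : BIdx1 v m => bandEntry v .a lam (p.1.1 : ℕ) (q.1.1 : ℕ) p.2 q.2)
  fb := Matrix.mulVecLin
    (fun p q : BIdx2 v m => bandEntry v .b lam (p.1.1 : ℕ) (q.1.1 : ℕ) p.2 q.2)
  fc := Matrix.mulVecLin
    (fun (p : BIdx2 v m) (q : BIdx1 v m) => bandEntry v .c lam (p.1.1 : ℕ) (q.1.1 : ℕ) p.2 q.2)

/-!
Attach to every position of a walk (for a band, a cyclic walk) the letters along which one can
leave it, reading the walk in either direction.  Two different ways out of the same position, along
`x` and along `y`, make `x⁻¹y` a subword of the walk or of its inverse.  Hence `x ≠ y`, so every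
`f_d` is a partial injection of positions, and `dd` never occurs, so `f_a² = f_b² = 0`.  Moreover
exactly one of `x` and `y` lies in `{c, c⁻¹}`, so each position with two ways out is matched by
`f_c` with exactly one position at the other vertex.  In a band every position has two ways out,
and `f_c` is a block permutation matrix with blocks `1` and `J_m(λ)`.  In a string only the two end
positions have a single way out, and `f_c` is a permutation matrix unless it has a zero row or
column at one of them.
-/

section Matrix

variable {R P Q n : Type*}

theorem mulVecLin_comp_self_eq_zero [CommSemiring R] [Fintype P] {M : Matrix P P R}
    (hM : M * M = 0) : M.mulVecLin ∘ₗ M.mulVecLin = 0 := by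
  rw [← Matrix.mulVecLin_mul, hM, Matrix.mulVecLin_zero]

theorem mulVecLin_bijective_of_isUnit_submatrix [CommRing R] [Fintype Q] [DecidableEq Q]
    {M : Matrix P Q R} (e : Q ≃ P) (h : IsUnit (M.submatrix e id)) :
    Function.Bijective M.mulVecLin := by
  have hcomp : (M.submatrix e id).mulVec = (e.arrowCongr (.refl R)).symm ∘ M.mulVecLin := rfl
  have hbij : Function.Bijective (M.submatrix e id).mulVec :=
    ⟨Matrix.mulVec_injective_of_isUnit h, Matrix.mulVec_surjective_iff_isUnit.2 h⟩
  rw [hcomp] at hbij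
  exact (Function.Bijective.of_comp_iff' (Equiv.bijective _) _).1 hbij

theorem exists_apply_ne_zero_of_mulVecLin_injective [CommSemiring R] [Nontrivial R] [Fintype Q]
    {M : Matrix P Q R} (h : Function.Injective M.mulVecLin) (q : Q) : ∃ p, M p q ≠ 0 := by
  classical
  by_contra! hcol
  have : M.mulVecLin (Pi.single q 1) = M.mulVecLin 0 := by
    rw [map_zero, Matrix.mulVecLin_apply, Matrix.mulVec_single_one]
    exact funext hcol
  exact one_ne_zero (Pi.single_eq_zero_iff.1 (h this))

theorem exists_apply_ne_zero_of_mulVecLin_surjective [CommSemiring R] [Nontrivial R] [Fintype Q]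
    {M : Matrix P Q R} (h : Function.Surjective M.mulVecLin) (p : P) : ∃ q, M p q ≠ 0 := by
  classical
  by_contra! hrow
  obtain ⟨x, hx⟩ := h (Pi.single p 1)
  have : (0 : R) = 1 := by
    simpa [Matrix.mulVec, dotProduct, hrow] using congrFun hx p
  exact zero_ne_one this

theorem isUnit_of_eq_zero_of_ne [Semiring R] [Fintype P] [DecidableEq P] {M : Matrix P P R}
    (hdiag : ∀ p, IsUnit (M p p)) (hoff : ∀ p q, p ≠ q → M p q = 0) : IsUnit M := by
  have hM : M = Matrix.diagonalRingHom P R fun p => M p p := by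
    ext p q
    obtain rfl | hpq := eq_or_ne p q
    · simp
    · simp [hoff p q hpq, hpq]
  rw [hM]
  exact (Pi.isUnit_iff.2 hdiag).map (Matrix.diagonalRingHom P R)

theorem mulVecLin_comp_comp_self_eq_zero [CommSemiring R] [Fintype P] [Fintype n]
    {A : Matrix P P (Matrix n n R)} (hA : A * A = 0) :
    (Matrix.comp P P n n R A).mulVecLin ∘ₗ (Matrix.comp P P n n R A).mulVecLin = 0 := by
  refine mulVecLin_comp_self_eq_zero ?_
  have := map_mul (Matrix.compRingEquiv P n R) A A
  rw [hA, map_zero] at this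
  exact this.symm

theorem mulVecLin_comp_bijective_of_isUnit_submatrix [CommRing R] [Fintype Q] [DecidableEq Q]
    [Fintype n] [DecidableEq n] {A : Matrix P Q (Matrix n n R)} (e : Q ≃ P)
    (h : IsUnit (A.submatrix e id)) :
    Function.Bijective (Matrix.comp P Q n n R A).mulVecLin :=
  mulVecLin_bijective_of_isUnit_submatrix (e.prodCongr (.refl n))
    (h.map (Matrix.compRingEquiv Q n R))

end Matrix

namespace Letter

@[simp]
theorem inv_inv (x : Letter) : x.inv.inv = x := by cases x <;> rfl

theorem inv_ne_self (x : Letter) : x.inv ≠ x := by cases x <;> simp [inv]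

theorem src_inv (x : Letter) : x.inv.src = x.tgt := by cases x <;> rfl

/-- The letter of `{c, c⁻¹}` that starts at the given vertex. -/
def connector : Bool → Letter
  | false => c
  | true => ci

theorem connector_eq_c_or_eq_ci (p : Bool) : connector p = c ∨ connector p = ci := by
  cases p <;> simp [connector]

theorem inv_eq_c_or_eq_ci {x : Letter} : x.inv = c ∨ x.inv = ci ↔ x = c ∨ x = ci := by
  cases x <;> simp [inv]

theorem eq_connector_src_iff {x : Letter} : x = connector x.src ↔ x = c ∨ x = ci := by
  cases x <;> simp [connector, src]

end Letter

open Letter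

theorem okPair.inv {x y : Letter} (h : okPair x y) : okPair y.inv x.inv := by
  revert h
  cases x <;> cases y <;> simp [okPair, Letter.inv, src, tgt]

theorem not_okPair_self (x : Letter) : ¬ okPair x x := by
  cases x <;> simp [okPair, src, tgt]

theorem okPair.connector_or_connector {x y : Letter} (h : okPair x.inv y) :
    (x = .c ∨ x = .ci) ∨ (y = .c ∨ y = .ci) := by
  revert h
  cases x <;> cases y <;> simp [okPair, Letter.inv, src, tgt]

/-- The combinatorial shape of a string or band module: positions placed at the vertices of the
quiver, where `edge i x j` says that the letter `x` of the word leads from position `i` to the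
next position `j`. -/
structure WalkGraph (K : Type*) where
  vert : K → Bool
  edge : K → Letter → K → Prop
  vert_eq_src {i j x} : edge i x j → vert i = x.src
  vert_eq_tgt {i j x} : edge i x j → vert j = x.tgt
  edge_right_unique {k x y i j} : edge k x i → edge k y j → x = y ∧ i = j
  edge_left_unique {k x y i j} : edge i x k → edge j y k → x = y ∧ i = j
  okPair_of_edge {i k j x y} : edge i x k → edge k y j → okPair x y

namespace WalkGraph

variable {K : Type*} (G : WalkGraph K)

/-- `G.step i x j` says that `x` leads from position `i` to position `j` when the word is read in
one of its two directions.  For `x = d` in `{a, b, c}` it says that `f_d` carries `i` to `j`. -/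
def step (i : K) (x : Letter) (j : K) : Prop :=
  G.edge i x j ∨ G.edge j x.inv i

/-- Every position is an end of a letter `c` or `c⁻¹` of the word. -/
def Saturated : Prop :=
  ∀ k, ∃ l, G.step k (connector (G.vert k)) l

/-- The positions placed at the vertex `p`. -/
abbrev positionsAt (p : Bool) : Type _ := {k // G.vert k = p}

variable {G} {i j k : K} {x y d : Letter}

theorem step.inv (h : G.step i x j) : G.step j x.inv i := by
  rw [step, inv_inv]
  exact h.symm

theorem step.vert_eq_src (h : G.step i x j) : G.vert i = x.src := by
  obtain h | h := h
  · exact G.vert_eq_src h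
  · rw [G.vert_eq_tgt h, ← src_inv, inv_inv]

theorem step.vert_eq_tgt (h : G.step i x j) : G.vert j = x.tgt := by
  rw [h.inv.vert_eq_src, src_inv]

theorem step.eq_or_okPair (hx : G.step k x i) (hy : G.step k y j) :
    (x = y ∧ i = j) ∨ okPair x.inv y := by
  obtain hx | hx := hx <;> obtain hy | hy := hy
  · exact .inl (G.edge_right_unique hx hy)
  · exact .inr (by simpa using (G.okPair_of_edge hy hx).inv)
  · exact .inr (G.okPair_of_edge hx hy)
  · obtain ⟨hxy, hij⟩ := G.edge_left_unique hx hy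
    exact .inl ⟨by simpa using congrArg Letter.inv hxy, hij⟩

theorem step.right_unique (hi : G.step k x i) (hj : G.step k x j) : i = j :=
  (hi.eq_or_okPair hj).elim And.right fun h => absurd (inv_inv x).symm h.2.1

theorem step.not_step (hij : G.step i x j) : ¬ G.step j x k := fun hjk =>
  (hij.inv.eq_or_okPair hjk).elim (fun h => inv_ne_self x h.1)
    fun h => not_okPair_self x (by rwa [inv_inv] at h)

theorem edge_not_edge_inv (h : G.edge i x j) : ¬ G.edge j x.inv i := fun h' =>
  (G.okPair_of_edge h h').2.1 rfl

theorem step.exists_step_connector (h : G.step k x i) (hx : x = .c ∨ x = .ci) :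
    ∃ l, G.step k (connector (G.vert k)) l :=
  ⟨i, by rwa [h.vert_eq_src, ← eq_connector_src_iff.2 hx]⟩

theorem exists_step_connector_of_edge_of_edge (hx : G.edge i x k) (hy : G.edge k y j) :
    ∃ l, G.step k (connector (G.vert k)) l := by
  have hx' : G.step k x.inv i := step.inv (.inl hx)
  have hy' : G.step k y j := .inl hy
  have hok : okPair x.inv.inv y := by simpa using G.okPair_of_edge hx hy
  exact hok.connector_or_connector.elim hx'.exists_step_connector hy'.exists_step_connector

theorem Saturated.exists_equiv (hG : G.Saturated) :
    ∃ σ : G.positionsAt false ≃ G.positionsAt true,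
      ∀ (i : G.positionsAt false) (j : G.positionsAt true), G.step i .c j ↔ σ i = j := by
  choose f hf using hG
  have step_c {k} (hk : G.vert k = false) : G.step k .c (f k) := by
    simpa only [hk, connector] using hf k
  have step_ci {k} (hk : G.vert k = true) : G.step k .ci (f k) := by
    simpa only [hk, connector] using hf k
  let σ : G.positionsAt false ≃ G.positionsAt true :=
    { toFun i := ⟨f i, (step_c i.2).vert_eq_tgt⟩
      invFun j := ⟨f j, (step_ci j.2).vert_eq_tgt⟩
      left_inv i := Subtype.ext <|
        (step_ci (step_c i.2).vert_eq_tgt).right_unique (step_c i.2).inv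
      right_inv j := Subtype.ext <|
        (step_c (step_ci j.2).vert_eq_tgt).right_unique (step_ci j.2).inv }
  refine ⟨σ, fun i j => ⟨fun h => Subtype.ext ((step_c i.2).right_unique h), ?_⟩⟩
  rintro rfl
  exact step_c i.2

section Matrix

variable [Fintype K] {R : Type*}

theorem mul_self_eq_zero_of_support_step [NonUnitalNonAssocSemiring R] {p : Bool}
    {A : Matrix (G.positionsAt p) (G.positionsAt p) R}
    (hA : ∀ i j : G.positionsAt p, ¬ G.step i d j → A j i = 0) : A * A = 0 := by
  ext j i
  rw [Matrix.mul_apply]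
  refine Finset.sum_eq_zero fun k _ => ?_
  by_cases hik : G.step i d k
  · rw [hA k j hik.not_step, zero_mul]
  · rw [hA i k hik, mul_zero]

theorem Saturated.exists_isUnit_submatrix [DecidableEq K] [Semiring R] (hG : G.Saturated)
    {A : Matrix (G.positionsAt true) (G.positionsAt false) R}
    (hunit : ∀ (i : G.positionsAt false) (j : G.positionsAt true), G.step i .c j → IsUnit (A j i))
    (hzero : ∀ (i : G.positionsAt false) (j : G.positionsAt true), ¬ G.step i .c j → A j i = 0) :
    ∃ σ : G.positionsAt false ≃ G.positionsAt true, IsUnit (A.submatrix σ id) := by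
  obtain ⟨σ, hσ⟩ := hG.exists_equiv
  refine ⟨σ, isUnit_of_eq_zero_of_ne (fun i => hunit _ _ ((hσ _ _).2 rfl)) fun i j hij => ?_⟩
  exact hzero _ _ fun h => hij (σ.injective ((hσ _ _).1 h)).symm

theorem mulVecLin_bijective_iff_saturated [CommRing R] [Nontrivial R]
    {A : Matrix (G.positionsAt true) (G.positionsAt false) R}
    (hunit : ∀ (i : G.positionsAt false) (j : G.positionsAt true), G.step i .c j → IsUnit (A j i))
    (hzero : ∀ (i : G.positionsAt false) (j : G.positionsAt true), ¬ G.step i .c j → A j i = 0) :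
    Function.Bijective A.mulVecLin ↔ G.Saturated := by
  classical
  constructor
  · rintro ⟨hinj, hsurj⟩ k
    cases hk : G.vert k
    · obtain ⟨l, hl⟩ := exists_apply_ne_zero_of_mulVecLin_injective hinj ⟨k, hk⟩
      exact ⟨l, by_contra fun h => hl (hzero _ _ h)⟩
    · obtain ⟨l, hl⟩ := exists_apply_ne_zero_of_mulVecLin_surjective hsurj ⟨k, hk⟩
      exact ⟨l, step.inv (x := .c) (by_contra fun h => hl (hzero _ _ h))⟩
  · intro hG
    obtain ⟨σ, hσ⟩ := hG.exists_isUnit_submatrix hunit hzero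
    exact mulVecLin_bijective_of_isUnit_submatrix σ hσ

end Matrix

end WalkGraph

section Word

variable {w : List Letter} {i k : ℕ} {x y : Letter}

theorem okPair_of_getElem? (hw : w.IsChain okPair) (hx : w[k]? = some x)
    (hy : w[k + 1]? = some y) : okPair x y := by
  obtain ⟨_, rfl⟩ := List.getElem?_eq_some_iff.1 hx
  obtain ⟨hk, rfl⟩ := List.getElem?_eq_some_iff.1 hy
  exact List.isChain_iff_getElem.1 hw k hk

theorem vertAt_eq_src (hx : w[k]? = some x) : vertAt w k = x.src := by
  simp [vertAt, hx]

theorem vertAt_succ_eq_tgt (hw : w.IsChain okPair) (hx : w[k]? = some x) :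
    vertAt w (k + 1) = x.tgt := by
  cases hy : w[k + 1]? with
  | some y => rw [vertAt_eq_src hy, (okPair_of_getElem? hw hx hy).1]
  | none =>
    have hlast : w.getLast? = some x := by
      have := List.getElem?_eq_none_iff.1 hy
      have := (List.getElem?_eq_some_iff.1 hx).1
      rw [List.getLast?_eq_getElem?, ← hx, show w.length - 1 = k by omega]
    simp [vertAt, hy, hlast]

end Word

section String

variable {w : List Letter}

/-- The graph of the string module of `w`, with positions `0, …, w.length`. -/
def stringGraph (hw : w.IsChain okPair) : WalkGraph (Fin (w.length + 1)) where
  vert k := vertAt w k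
  edge i x j := (j : ℕ) = i + 1 ∧ w[(i : ℕ)]? = some x
  vert_eq_src h := vertAt_eq_src h.2
  vert_eq_tgt h := h.1 ▸ vertAt_succ_eq_tgt hw h.2
  edge_right_unique := by
    rintro k x y i j ⟨hi, hx⟩ ⟨hj, hy⟩
    exact ⟨by simpa [hx] using hy, by omega⟩
  edge_left_unique := by
    rintro k x y i j ⟨hi, hx⟩ ⟨hj, hy⟩
    obtain rfl : i = j := by omega
    exact ⟨by simpa [hx] using hy, rfl⟩
  okPair_of_edge := by
    rintro i k j x y ⟨hk, hx⟩ ⟨-, hy⟩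
    exact okPair_of_getElem? hw hx (hk ▸ hy)

theorem stringGraph_edge (hw : w.IsChain okPair) {k : ℕ} (hk : k < w.length) :
    (stringGraph hw).edge ⟨k, by omega⟩ w[k] ⟨k + 1, by omega⟩ :=
  ⟨rfl, List.getElem?_eq_getElem hk⟩

theorem stringGraph_exists_step_zero_iff (hw : w.IsChain okPair) :
    (∃ l, (stringGraph hw).step 0 (connector ((stringGraph hw).vert 0)) l) ↔
      w.head? = some .c ∨ w.head? = some .ci := by
  rw [List.head?_eq_getElem?]
  constructor
  · rintro ⟨l, ⟨-, hx⟩ | ⟨hl, -⟩⟩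
    · rw [Fin.val_zero] at hx
      simpa only [hx, Option.some_inj] using connector_eq_c_or_eq_ci _
    · exact absurd hl (Nat.succ_ne_zero _).symm
  · intro hhead
    have hlen : 0 < w.length := by
      by_contra hlen
      simp_all
    refine WalkGraph.step.exists_step_connector (.inl (stringGraph_edge hw hlen)) ?_
    simpa [hlen] using hhead

theorem stringGraph_exists_step_last_iff (hw : w.IsChain okPair) :
    (∃ l, (stringGraph hw).step (Fin.last _) (connector ((stringGraph hw).vert (Fin.last _))) l) ↔
      w.getLast? = some .c ∨ w.getLast? = some .ci := by
  rw [List.getLast?_eq_getElem?]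
  constructor
  · rintro ⟨l, ⟨hl, -⟩ | ⟨hl, hx⟩⟩
    · exact absurd l.2 (by simp [hl])
    · rw [Fin.val_last] at hl
      rw [hl, Nat.add_sub_cancel, hx]
      simpa only [Option.some_inj] using inv_eq_c_or_eq_ci.2 (connector_eq_c_or_eq_ci _)
  · intro hlast
    have hlen : w.length - 1 < w.length := by
      by_contra hlen
      simp_all
    have hedge := stringGraph_edge hw hlen
    have hend : (⟨w.length - 1 + 1, by omega⟩ : Fin (w.length + 1)) = Fin.last _ :=
      Fin.ext (Nat.sub_add_cancel (Nat.zero_lt_of_lt hlen))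
    rw [hend] at hedge
    refine (WalkGraph.step.inv (.inl hedge)).exists_step_connector (inv_eq_c_or_eq_ci.2 ?_)
    simpa [hlen] using hlast

theorem stringGraph_saturated_iff (hw : w.IsChain okPair) :
    (stringGraph hw).Saturated ↔
      (w.head? = some .c ∨ w.head? = some .ci) ∧
        (w.getLast? = some .c ∨ w.getLast? = some .ci) := by
  rw [← stringGraph_exists_step_zero_iff hw, ← stringGraph_exists_step_last_iff hw]
  refine ⟨fun h => ⟨h _, h _⟩, fun ⟨hzero, hlast⟩ k => ?_⟩
  obtain rfl | ⟨i, rfl⟩ := k.eq_zero_or_eq_succ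
  · exact hzero
  obtain hi | hi := (Nat.succ_le_of_lt i.2).eq_or_lt
  · obtain hi : i.succ = Fin.last _ := Fin.ext hi
    exact hi ▸ hlast
  · exact WalkGraph.exists_step_connector_of_edge_of_edge
      (stringGraph_edge hw i.2) (stringGraph_edge hw hi)

theorem strEntry_of_step (hw : w.IsChain okPair) {i j : Fin (w.length + 1)} {d : Letter}
    (h : (stringGraph hw).step i d j) : strEntry w d j i = 1 := if_pos h

theorem strEntry_of_not_step (hw : w.IsChain okPair) {i j : Fin (w.length + 1)} {d : Letter}
    (h : ¬ (stringGraph hw).step i d j) : strEntry w d j i = 0 := if_neg h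

theorem stringModule_fa_comp_fa (hw : w.IsChain okPair) :
    (stringModule w).fa ∘ₗ (stringModule w).fa = 0 :=
  mulVecLin_comp_self_eq_zero <|
    (stringGraph hw).mul_self_eq_zero_of_support_step fun _ _ => strEntry_of_not_step hw

theorem stringModule_fb_comp_fb (hw : w.IsChain okPair) :
    (stringModule w).fb ∘ₗ (stringModule w).fb = 0 :=
  mulVecLin_comp_self_eq_zero <|
    (stringGraph hw).mul_self_eq_zero_of_support_step fun _ _ => strEntry_of_not_step hw

theorem stringModule_fc_bijective_iff (hw : w.IsChain okPair) :
    Function.Bijective (stringModule w).fc ↔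
      (w.head? = some .c ∨ w.head? = some .ci) ∧
        (w.getLast? = some .c ∨ w.getLast? = some .ci) := by
  rw [← stringGraph_saturated_iff hw]
  refine (stringGraph hw).mulVecLin_bijective_iff_saturated (fun i j h => ?_) fun _ _ =>
    strEntry_of_not_step hw
  rw [strEntry_of_step hw h]
  exact isUnit_one

end String

section Band

variable {v : List Letter} {lam : ℂ} {m : ℕ}

/-- The letter `x` of the cyclic word `v` leads from position `i` to position `j`. -/
abbrev bandEdge (v : List Letter) (i : ℕ) (x : Letter) (j : ℕ) : Prop :=
  (j = i + 1 ∨ j = 0 ∧ i + 1 = v.length) ∧ v[i]? = some x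

theorem okPair_of_bandEdge (hv : (v ++ v).IsChain okPair) {i j : ℕ} {x y : Letter}
    (hx : bandEdge v i x j) (hy : v[j]? = some y) : okPair x y := by
  obtain ⟨hj, hx⟩ := hx
  have hi := (List.getElem?_eq_some_iff.1 hx).1
  have hnext : (v ++ v)[i + 1]? = v[j]? := by
    obtain rfl | ⟨rfl, hi⟩ := hj
    · exact List.getElem?_append_left (List.getElem?_eq_some_iff.1 hy).1
    · rw [List.getElem?_append_right hi.ge, hi, Nat.sub_self]
  exact okPair_of_getElem? hv ((List.getElem?_append_left hi).trans hx) (hnext.trans hy)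

theorem bandEdge_right_unique {k i j : ℕ} (hi : i < v.length) (hj : j < v.length) {x y : Letter}
    (hx : bandEdge v k x i) (hy : bandEdge v k y j) : x = y ∧ i = j :=
  ⟨by simpa [hx.2] using hy.2, by omega⟩

theorem bandEdge_left_unique {k i j : ℕ} {x y : Letter} (hx : bandEdge v i x k)
    (hy : bandEdge v j y k) : x = y ∧ i = j := by
  obtain rfl : i = j := by omega
  exact ⟨by simpa [hx.2] using hy.2, rfl⟩

/-- The cyclic graph of the band modules of `v`, with positions `0, …, v.length - 1`. -/
def bandGraph (hv : (v ++ v).IsChain okPair) : WalkGraph (Fin v.length) where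
  vert k := vertAt v k
  edge i x j := bandEdge v i x j
  vert_eq_src h := vertAt_eq_src h.2
  vert_eq_tgt {i j x} h := by
    have hy := List.getElem?_eq_getElem j.2
    rw [vertAt_eq_src hy, (okPair_of_bandEdge hv h hy).1]
  edge_right_unique {_ _ _ i j} hx hy :=
    (bandEdge_right_unique i.2 j.2 hx hy).imp_right Fin.ext
  edge_left_unique hx hy := (bandEdge_left_unique hx hy).imp_right Fin.ext
  okPair_of_edge hx hy := okPair_of_bandEdge hv hx hy.2

theorem bandGraph_exists_edge_right (hv : (v ++ v).IsChain okPair) (k : Fin v.length) :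
    ∃ x j, (bandGraph hv).edge k x j := by
  have hx := List.getElem?_eq_getElem k.2
  obtain hk | hk := (Nat.succ_le_of_lt k.2).eq_or_lt
  · exact ⟨_, ⟨0, by omega⟩, .inr ⟨rfl, hk⟩, hx⟩
  · exact ⟨_, ⟨k + 1, hk⟩, .inl rfl, hx⟩

theorem bandGraph_exists_edge_left (hv : (v ++ v).IsChain okPair) (k : Fin v.length) :
    ∃ x i, (bandGraph hv).edge i x k := by
  obtain ⟨_ | i, hi⟩ := k
  · exact ⟨_, ⟨v.length - 1, by omega⟩, .inr ⟨rfl, Nat.sub_add_cancel hi⟩,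
      List.getElem?_eq_getElem (by omega)⟩
  · exact ⟨_, ⟨i, Nat.lt_of_succ_lt hi⟩, .inl rfl, List.getElem?_eq_getElem (Nat.lt_of_succ_lt hi)⟩

theorem bandGraph_saturated (hv : (v ++ v).IsChain okPair) : (bandGraph hv).Saturated := by
  intro k
  obtain ⟨x, i, hx⟩ := bandGraph_exists_edge_left hv k
  obtain ⟨y, j, hy⟩ := bandGraph_exists_edge_right hv k
  exact WalkGraph.exists_step_connector_of_edge_of_edge hx hy

theorem isUnit_jordan (hlam : lam ≠ 0) : IsUnit (Matrix.of (jordan lam (m := m))) := by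
  have htri : (Matrix.of (jordan lam (m := m))).IsLowerTriangular := by
    intro s t (hst : s < t)
    rw [Matrix.of_apply, jordan, if_neg hst.ne, if_neg (by omega)]
  rw [Matrix.isUnit_iff_isUnit_det, Matrix.det_of_isLowerTriangular _ htri]
  simp [jordan, hlam]

/-- The map from the `i`-th to the `j`-th copy of `ℂᵐ` along an edge of the cyclic word: the
wrap-around edge is the one with `j ≠ i + 1`. -/
def bandTransport (lam : ℂ) (m i j : ℕ) : Matrix (Fin m) (Fin m) ℂ :=
  if j = i + 1 then 1 else Matrix.of (jordan lam)

theorem isUnit_bandTransport (hlam : lam ≠ 0) (i j : ℕ) : IsUnit (bandTransport lam m i j) := by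
  rw [bandTransport]
  split_ifs
  exacts [isUnit_one, isUnit_jordan hlam]

/-- The matrix of `f_d` on the band module, as a matrix of `m × m` blocks. -/
def bandBlock (v : List Letter) (d : Letter) (lam : ℂ) (m j i : ℕ) : Matrix (Fin m) (Fin m) ℂ :=
  Matrix.of (bandEntry v d lam j i)

theorem bandBlock_eq_add (v : List Letter) (d : Letter) (lam : ℂ) (m j i : ℕ) :
    bandBlock v d lam m j i =
      (if bandEdge v i d j then bandTransport lam m i j else 0) +
        (if bandEdge v j d.inv i then bandTransport lam m j i else 0) := by
  have entry_eq (k l : ℕ) (x : Letter) (s t : Fin m) :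
      (if bandEdge v k x l then bandTransport lam m k l else 0) s t =
        (if l = k + 1 ∧ v[k]? = some x then (if s = t then 1 else 0) else 0) +
          (if l = 0 ∧ k + 1 = v.length ∧ v[k]? = some x then jordan lam s t else 0) := by
    by_cases hx : v[k]? = some x <;> by_cases hl : l = k + 1 <;>
      simp [bandTransport, bandEdge, hx, hl, Matrix.one_apply,
        apply_ite (fun M : Matrix _ _ ℂ => M s t)]
  ext s t
  rw [Matrix.add_apply, entry_eq, entry_eq, bandBlock, Matrix.of_apply, bandEntry, ← add_assoc]

theorem bandBlock_of_not_step (hv : (v ++ v).IsChain okPair) {i j : Fin v.length} {d : Letter}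
    (h : ¬ (bandGraph hv).step i d j) : bandBlock v d lam m j i = 0 := by
  obtain ⟨hforward, hbackward⟩ : ¬ bandEdge v i d j ∧ ¬ bandEdge v j d.inv i := not_or.1 h
  rw [bandBlock_eq_add, if_neg hforward, if_neg hbackward, add_zero]

theorem isUnit_bandBlock_of_step (hv : (v ++ v).IsChain okPair) (hlam : lam ≠ 0)
    {i j : Fin v.length} {d : Letter} (h : (bandGraph hv).step i d j) :
    IsUnit (bandBlock v d lam m j i) := by
  rw [bandBlock_eq_add]
  obtain hforward | hbackward : bandEdge v i d j ∨ bandEdge v j d.inv i := h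
  · have hbackward : ¬ bandEdge v j d.inv i :=
      WalkGraph.edge_not_edge_inv (G := bandGraph hv) hforward
    rw [if_pos hforward, if_neg hbackward, add_zero]
    exact isUnit_bandTransport hlam _ _
  · have hforward : ¬ bandEdge v i d j :=
      inv_inv d ▸ WalkGraph.edge_not_edge_inv (G := bandGraph hv) hbackward
    rw [if_neg hforward, if_pos hbackward, zero_add]
    exact isUnit_bandTransport hlam _ _

theorem bandModule_fa_comp_fa (hv : (v ++ v).IsChain okPair) :
    (bandModule v lam m).fa ∘ₗ (bandModule v lam m).fa = 0 :=
  mulVecLin_comp_comp_self_eq_zero <|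
    (bandGraph hv).mul_self_eq_zero_of_support_step (A := fun j i => bandBlock v .a lam m j i)
      fun _ _ => bandBlock_of_not_step hv

theorem bandModule_fb_comp_fb (hv : (v ++ v).IsChain okPair) :
    (bandModule v lam m).fb ∘ₗ (bandModule v lam m).fb = 0 :=
  mulVecLin_comp_comp_self_eq_zero <|
    (bandGraph hv).mul_self_eq_zero_of_support_step (A := fun j i => bandBlock v .b lam m j i)
      fun _ _ => bandBlock_of_not_step hv

theorem bandModule_fc_eq (hv : (v ++ v).IsChain okPair) :
    (bandModule v lam m).fc = (Matrix.comp ((bandGraph hv).positionsAt true)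
      ((bandGraph hv).positionsAt false) _ _ _ fun j i => bandBlock v .c lam m j i).mulVecLin :=
  rfl

theorem bandModule_fc_bijective (hv : (v ++ v).IsChain okPair) (hlam : lam ≠ 0) :
    Function.Bijective (bandModule v lam m).fc := by
  obtain ⟨σ, hσ⟩ := (bandGraph_saturated hv).exists_isUnit_submatrix
    (A := fun j i => bandBlock v .c lam m j i)
    (fun _ _ => isUnit_bandBlock_of_step hv hlam) (fun _ _ => bandBlock_of_not_step hv)
  exact bandModule_fc_eq hv ▸ mulVecLin_comp_bijective_of_isUnit_submatrix σ hσ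

theorem IsBand.isWalk_append_self (hv : IsBand v) : IsWalk (v ++ v) := by
  simpa [List.replicate_succ] using hv.2.2.1 2 two_pos

end Band

theorem band_fc_iso_and_string_fc_iso_iff_general :
    (∀ v : List Letter, IsWalk (v ++ v) → ∀ lam : ℂ, lam ≠ 0 → ∀ m : ℕ,
      ((bandModule v lam m).fa ∘ₗ (bandModule v lam m).fa = 0 ∧
        (bandModule v lam m).fb ∘ₗ (bandModule v lam m).fb = 0) ∧
      Function.Bijective (bandModule v lam m).fc) ∧
    (∀ w : List Letter, IsWalk w →
      ((stringModule w).fa ∘ₗ (stringModule w).fa = 0 ∧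
        (stringModule w).fb ∘ₗ (stringModule w).fb = 0) ∧
      (Function.Bijective (stringModule w).fc ↔
        ((w.head? = some .c ∨ w.head? = some .ci) ∧
          (w.getLast? = some .c ∨ w.getLast? = some .ci)))) :=
  ⟨fun _ hv _ hlam _ =>
      ⟨⟨bandModule_fa_comp_fa hv.2, bandModule_fb_comp_fb hv.2⟩,
        bandModule_fc_bijective hv.2 hlam⟩,
    fun _ hw =>
      ⟨⟨stringModule_fa_comp_fa hw.2, stringModule_fb_comp_fb hw.2⟩,
        stringModule_fc_bijective_iff hw.2⟩⟩

/-- (i) Every band module `M(v, λ, m)` (with `λ ≠ 0`, `m ≥ 1`) has its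
map `f_c` an isomorphism.  (ii) A string module `M(w)` has its map `f_c` an isomorphism if
and only if both the first and the last letter of the walk `w` belong to `{c, c⁻¹}`.
(In both cases the module moreover satisfies the Jacobian relations.) -/
theorem band_fc_iso_and_string_fc_iso_iff :
    (∀ v : List Letter, IsBand v → ∀ lam : ℂ, lam ≠ 0 → ∀ m : ℕ, 1 ≤ m →
      ((bandModule v lam m).fa ∘ₗ (bandModule v lam m).fa = 0 ∧
        (bandModule v lam m).fb ∘ₗ (bandModule v lam m).fb = 0) ∧
      Function.Bijective (bandModule v lam m).fc) ∧
    (∀ w : List Letter, IsWalk w →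
      ((stringModule w).fa ∘ₗ (stringModule w).fa = 0 ∧
        (stringModule w).fb ∘ₗ (stringModule w).fb = 0) ∧
      (Function.Bijective (stringModule w).fc ↔
        ((w.head? = some .c ∨ w.head? = some .ci) ∧
          (w.getLast? = some .c ∨ w.getLast? = some .ci)))) :=
  ⟨fun v hv lam hlam m _ => band_fc_iso_and_string_fc_iso_iff_general.1 v hv.isWalk_append_self
      lam hlam m,
    band_fc_iso_and_string_fc_iso_iff_general.2⟩
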